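/- For every integer n ≥ 2, every α ∈ ℂ, and all fundamental objects X, Y of the algebra C₂(α), one has tr(R_X ∘ R_Y) = (2α + 1) · tr(R_X) · tr(R_Y). (Equivalently, for α ≠ −1/2 the (1,1)-invariant of C₂(α) equals 1/(2α+1).) -/

import Mathlib

open Function Submodule

/-! Common framework: `V = ℂ^{n+1}`, `n`-ary multiplications as functions
`(Fin n → V) → V`, the action of `GL(V)` on them, orbits, and the
(n+1)-dimensional n-ary Filippov algebras of Kaygorodov–Volkov, each described
as an alternating `n`-linear map by its values on the increasing tuples of
distinct standard basis vectors (0-indexed: `bt n j` is the tuple omitting `e j`). -/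

/-- The underlying space `V = ℂ^{n+1}`. -/
abbrev nV (n : ℕ) : Type := Fin (n + 1) → ℂ

/-- The `j`-th standard basis vector of `V` (0-indexed). -/
def sb (n : ℕ) (j : Fin (n + 1)) : nV n := Pi.single j 1

/-- The increasing `n`-tuple of standard basis vectors omitting `e j`. -/
def bt (n : ℕ) (j : Fin (n + 1)) : Fin n → nV n := fun k => sb n (j.succAbove k)

/-- The action of `GL(V)` (invertible linear maps) on `n`-ary multiplications:
`(g • μ)(x₁, …, xₙ) = g (μ (g⁻¹ x₁, …, g⁻¹ xₙ))`. -/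
noncomputable def glAct (n : ℕ) (g : nV n ≃ₗ[ℂ] nV n) (μ : (Fin n → nV n) → nV n) :
    (Fin n → nV n) → nV n :=
  fun x => g (μ fun i => g.symm (x i))

/-- The `GL(V)`-orbit of an `n`-ary multiplication. -/
def glOrbit (n : ℕ) (μ : (Fin n → nV n) → nV n) : Set ((Fin n → nV n) → nV n) :=
  {ν | ∃ g : nV n ≃ₗ[ℂ] nV n, ν = glAct n g μ}

/-- The algebra `B`: `[e₂, …, e_{n+1}] = e₁` (0-indexed: the tuple omitting `e 0`
maps to `e 0`), all other increasing basis products zero. -/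
def IsB (n : ℕ) (μ : AlternatingMap ℂ (nV n) (nV n) (Fin n)) : Prop :=
  μ (bt n 0) = sb n 0 ∧ ∀ j : Fin (n + 1), j ≠ 0 → μ (bt n j) = 0

/-- The algebra `C₁`: `[e₂, …, e_{n+1}] = e₁`, `[e₁, e₃, …, e_{n+1}] = e₂`. -/
def IsC1 (n : ℕ) (μ : AlternatingMap ℂ (nV n) (nV n) (Fin n)) : Prop :=
  μ (bt n 0) = sb n 0 ∧ μ (bt n 1) = sb n 1 ∧
    ∀ j : Fin (n + 1), j ≠ 0 → j ≠ 1 → μ (bt n j) = 0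

/-- The algebra `C₂(α)`: `[e₂, …, e_{n+1}] = α e₁ + e₂`, `[e₁, e₃, …, e_{n+1}] = e₂`. -/
def IsC2 (n : ℕ) (α : ℂ) (μ : AlternatingMap ℂ (nV n) (nV n) (Fin n)) : Prop :=
  μ (bt n 0) = α • sb n 0 + sb n 1 ∧ μ (bt n 1) = sb n 1 ∧
    ∀ j : Fin (n + 1), j ≠ 0 → j ≠ 1 → μ (bt n j) = 0

/-- The algebra `C₃`: `[e₁, e₃, …, e_{n+1}] = e₁`, `[e₂, e₃, …, e_{n+1}] = e₂`. -/
def IsC3 (n : ℕ) (μ : AlternatingMap ℂ (nV n) (nV n) (Fin n)) : Prop :=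
  μ (bt n 1) = sb n 0 ∧ μ (bt n 0) = sb n 1 ∧
    ∀ j : Fin (n + 1), j ≠ 0 → j ≠ 1 → μ (bt n j) = 0

/-- The algebra `D_r`: `[e₁, …, e_{i-1}, e_{i+1}, …, e_{n+1}] = e_i` for `1 ≤ i ≤ r`
(0-indexed: the tuple omitting `e j` maps to `e j` for `j < r` and to `0` otherwise). -/
def IsD (n r : ℕ) (μ : AlternatingMap ℂ (nV n) (nV n) (Fin n)) : Prop :=
  ∀ j : Fin (n + 1), ((j : ℕ) < r → μ (bt n j) = sb n j) ∧ (r ≤ (j : ℕ) → μ (bt n j) = 0)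

/-- An alternating map in `n` variables on `ℂ^{n+1}` is determined by its values on the
increasing tuples of distinct standard basis vectors. -/
lemma alternatingMap_ext_bt {n : ℕ} {f g : AlternatingMap ℂ (nV n) (nV n) (Fin n)}
    (h : ∀ j, f (bt n j) = g (bt n j)) : f = g := by
  refine Module.Basis.ext_alternating (Pi.basisFun ℂ (Fin (n + 1))) fun v hv => ?_
  obtain ⟨j, hj⟩ : ∃ j, ∀ i, v i ≠ j := by
    by_contra! hs
    simpa using Fintype.card_le_of_surjective v hs
  choose s hs using fun i => Fin.exists_succAbove_eq (hj i)
  have hinj : Injective s := fun a b hab => hv (by rw [← hs a, ← hs b, hab])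
  let σ : Equiv.Perm (Fin n) := Equiv.ofBijective s (Finite.injective_iff_bijective.mp hinj)
  have hσ : (fun i => Pi.basisFun ℂ (Fin (n + 1)) (v i)) = bt n j ∘ σ := by
    funext i
    simp [bt, sb, σ, hs]
  rw [hσ, f.map_perm, g.map_perm, h j]

/-- The minor of an `n`-tuple in `ℂ^{n+1}` obtained by deleting the coordinate `j`. -/
noncomputable def coordMinor (n : ℕ) (j : Fin (n + 1)) : AlternatingMap ℂ (nV n) ℂ (Fin n) :=
  Matrix.detRowAlternating.compLinearMap (LinearMap.funLeft ℂ ℂ j.succAbove)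

lemma coordMinor_apply {n : ℕ} (j : Fin (n + 1)) (z : Fin n → nV n) :
    coordMinor n j z = Matrix.det (Matrix.of fun i k => z i (j.succAbove k)) := rfl

lemma coordMinor_bt_self {n : ℕ} (j : Fin (n + 1)) : coordMinor n j (bt n j) = 1 := by
  rw [coordMinor_apply, ← Matrix.det_one (n := Fin n)]
  congr 1
  ext i k
  simp [bt, sb, Pi.single_apply, Matrix.one_apply, eq_comm]

lemma coordMinor_bt_of_ne {n : ℕ} {i j : Fin (n + 1)} (h : i ≠ j) :
    coordMinor n j (bt n i) = 0 := by
  obtain ⟨k, hk⟩ := Fin.exists_succAbove_eq h.symm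
  rw [coordMinor_apply]
  refine Matrix.det_eq_zero_of_row_eq_zero k fun l => ?_
  simp [bt, sb, hk, Pi.single_apply, Fin.succAbove_ne]

lemma IsC2.apply_eq {n : ℕ} {α : ℂ} {μ : AlternatingMap ℂ (nV n) (nV n) (Fin n)} (hn : n ≠ 0)
    (hμ : IsC2 n α μ) (z : Fin n → nV n) :
    μ z = coordMinor n 0 z • (α • sb n 0 + sb n 1) + coordMinor n 1 z • sb n 1 := by
  have : NeZero n := ⟨hn⟩
  have h01 : (0 : Fin (n + 1)) ≠ 1 := by
    simp
  suffices h : μ =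
      (LinearMap.toSpanSingleton ℂ _ (α • sb n 0 + sb n 1)).compAlternatingMap (coordMinor n 0) +
      (LinearMap.toSpanSingleton ℂ _ (sb n 1)).compAlternatingMap (coordMinor n 1) by
    conv_lhs => rw [h]
    simp
  refine alternatingMap_ext_bt fun j => ?_
  obtain ⟨h0, h1, h⟩ := hμ
  by_cases hj0 : j = 0
  · subst hj0
    simp [h0, coordMinor_bt_self, coordMinor_bt_of_ne h01]
  by_cases hj1 : j = 1
  · subst hj1
    simp [h1, coordMinor_bt_self, coordMinor_bt_of_ne h01.symm]
  · simp [h j hj0 hj1, coordMinor_bt_of_ne hj0, coordMinor_bt_of_ne hj1]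

/-- The minor of an `m`-tuple in `ℂ^{m+2}` obtained by deleting the first two coordinates. -/
noncomputable def tailMinor {m : ℕ} (X : Fin m → nV (m + 1)) : ℂ :=
  Matrix.det (Matrix.of fun i k : Fin m => X i k.succ.succ)

lemma coordMinor_cons_sb_self {m : ℕ} (j : Fin (m + 2)) (X : Fin m → nV (m + 1)) :
    coordMinor (m + 1) j (Fin.cons (sb (m + 1) j) X) = 0 := by
  rw [coordMinor_apply]
  refine Matrix.det_eq_zero_of_row_eq_zero 0 fun l => ?_
  simp [sb, Fin.succAbove_ne]

lemma coordMinor_zero_cons_sb_one {m : ℕ} (X : Fin m → nV (m + 1)) :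
    coordMinor (m + 1) 0 (Fin.cons (sb (m + 1) 1) X) = tailMinor X := by
  rw [coordMinor_apply, Matrix.det_succ_row_zero, Fin.sum_univ_succ, Finset.sum_eq_zero]
  · simp [sb, tailMinor, Matrix.submatrix]
  · intro k _
    simp [sb, Fin.ext_iff]

lemma coordMinor_one_cons_sb_zero {m : ℕ} (X : Fin m → nV (m + 1)) :
    coordMinor (m + 1) 1 (Fin.cons (sb (m + 1) 0) X) = tailMinor X := by
  rw [coordMinor_apply, Matrix.det_succ_row_zero, Fin.sum_univ_succ, Finset.sum_eq_zero]
  · simp [sb, tailMinor, Matrix.submatrix]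
  · intro k _
    simp [sb]

lemma trace_eq_sum_apply_sb {n : ℕ} (f : nV n →ₗ[ℂ] nV n) :
    LinearMap.trace ℂ (nV n) f = ∑ i, f (sb n i) i := by
  rw [LinearMap.trace_eq_matrix_trace ℂ (Pi.basisFun ℂ (Fin (n + 1)))]
  simp [Matrix.trace, sb]

/-- For every integer `n = m + 1 ≥ 2`, every `α ∈ ℂ`, and all fundamental
objects `X, Y` of `C₂(α)` (with associated right multiplication operators
`R_X z = μ(z, X₁, …, X_{n-1})`, `R_Y`), one has
`tr(R_X ∘ R_Y) = (2α + 1) · tr(R_X) · tr(R_Y)`. -/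
theorem C2_trace_invariant (m : ℕ) (hm : 1 ≤ m) (α : ℂ)
    (μ : AlternatingMap ℂ (nV (m + 1)) (nV (m + 1)) (Fin (m + 1))) (hμ : IsC2 (m + 1) α μ)
    (X Y : Fin m → nV (m + 1)) (RX RY : nV (m + 1) →ₗ[ℂ] nV (m + 1))
    (hRX : ∀ z : nV (m + 1), RX z = μ (Fin.cons z X))
    (hRY : ∀ z : nV (m + 1), RY z = μ (Fin.cons z Y)) :
    LinearMap.trace ℂ (nV (m + 1)) (RX ∘ₗ RY) =
      (2 * α + 1) * (LinearMap.trace ℂ (nV (m + 1)) RX * LinearMap.trace ℂ (nV (m + 1)) RY) := by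
  have hval (Z : Fin m → nV (m + 1)) (R : nV (m + 1) →ₗ[ℂ] nV (m + 1))
      (hR : ∀ z, R z = μ (Fin.cons z Z)) :
      R (sb (m + 1) 0) = tailMinor Z • sb (m + 1) 1 ∧
      R (sb (m + 1) 1) = tailMinor Z • (α • sb (m + 1) 0 + sb (m + 1) 1) ∧
      ∀ z, ∀ k : Fin m, R z k.succ.succ = 0 := by
    refine ⟨?_, ?_, fun z k => ?_⟩ <;> rw [hR, hμ.apply_eq m.succ_ne_zero]
    · simp [coordMinor_cons_sb_self, coordMinor_one_cons_sb_zero]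
    · simp [coordMinor_cons_sb_self, coordMinor_zero_cons_sb_one]
    · simp [sb, Fin.ext_iff]
  obtain ⟨hX0, hX1, hXk⟩ := hval X RX hRX
  obtain ⟨hY0, hY1, hYk⟩ := hval Y RY hRY
  simp only [trace_eq_sum_apply_sb, Fin.sum_univ_succ, Fin.succ_zero_eq_one, LinearMap.comp_apply,
    hXk, hYk, hX0, hX1, hY0, hY1, map_smul, map_add]
  simp [sb]
  ring
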